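/- The monodromy matrices satisfy the RTT relation: R^(n)_{ab}(x,y) T_a(x) T_b(y) = T_b(y) T_a(x) R^(n)_{ab}(x,y) as endomorphisms of V_a ⊗ V_b ⊗ H, where T_a(x) (resp. T_b(y)) acts on V_a ⊗ H (resp. V_b ⊗ H) and as the identity on the other auxiliary space, and R^(n)_{ab}(x,y) acts on V_a ⊗ V_b. -/

import Mathlib

noncomputable section
open scoped BigOperators

variable {F : Type*}

/-- `x ⊖ y := (x - y)/(1 + β·y)`. -/
def om [Field F] (β x y : F) : F := (x - y) / (1 + β * y)

/-- `⊖ t := -t/(1 + β·t)`. -/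
def negOm [Field F] (β t : F) : F := (-t) / (1 + β * t)

/-- The R-matrix `R^{(n)}(x,y)` on `V ⊗ V`, `V = F^n`, with entries
`R_{ij,kl} = (1 + [k<l]·β(x⊖y)) δ_{il} δ_{jk} + [k>l]·(x⊖y) δ_{ik} δ_{jl}`;
the row index is the pair `(i,j)`, the column index is the pair `(k,l)`. -/
def Rmat [Field F] (n : ℕ) (β x y : F) :
    Matrix (Fin n × Fin n) (Fin n × Fin n) F := Matrix.of fun p q =>
  (if p.1 = q.2 ∧ p.2 = q.1 then (if q.1 < q.2 then 1 + β * om β x y else 1) else 0) +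
  (if p.1 = q.1 ∧ p.2 = q.2 ∧ q.2 < q.1 then om β x y else 0)

/-- `R_{a i}(u, τ)` : the R-matrix acting on the auxiliary space (first factor)
and the `i`-th site of `H = (F^n)^{⊗N}`, identity elsewhere. -/
def Rsite [Field F] (n N : ℕ) (β u τ : F) (i : Fin N) :
    Matrix (Fin n × (Fin N → Fin n)) (Fin n × (Fin N → Fin n)) F := Matrix.of fun p q =>
  Rmat n β u τ (p.1, p.2 i) (q.1, q.2 i) *
    (if ∀ j, j ≠ i → p.2 j = q.2 j then 1 else 0)

/-- The monodromy matrix `T_a(u) = R_{aN}(u,t_N) ⋯ R_{a1}(u,t_1)` on `V_a ⊗ H`. -/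
def Tmono [Field F] (n N : ℕ) (β u : F) (t : Fin N → F) :
    Matrix (Fin n × (Fin N → Fin n)) (Fin n × (Fin N → Fin n)) F :=
  ((List.ofFn fun i : Fin N => Rsite n N β u (t i) i).reverse).prod

/-- The block `T_a(u)_{r c}` (with respect to the auxiliary space) as an operator on `H`. -/
def blockOp [Field F] (n N : ℕ) (β u : F) (t : Fin N → F) (r c : Fin n) :
    Matrix (Fin N → Fin n) (Fin N → Fin n) F :=
  Matrix.of fun s s' => Tmono n N β u t (r, s) (c, s')

/-- The natural basis vector `|n_1,…,n_N⟩` of `H` (also used as a dual basis covector). -/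
def ket [Field F] (n N : ℕ) (g : Fin N → Fin n) : (Fin N → Fin n) → F :=
  fun s => if s = g then 1 else 0

/-- `T_a` : the monodromy matrix acting on `V_a ⊗ H`, identity on `V_b`,
as an endomorphism of `V_a ⊗ V_b ⊗ H`. -/
def TaEmb [Field F] (n N : ℕ)
    (M : Matrix (Fin n × (Fin N → Fin n)) (Fin n × (Fin N → Fin n)) F) :
    Matrix (Fin n × Fin n × (Fin N → Fin n)) (Fin n × Fin n × (Fin N → Fin n)) F :=
  Matrix.of fun p q => M (p.1, p.2.2) (q.1, q.2.2) * (if p.2.1 = q.2.1 then 1 else 0)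

/-- `T_b` : the monodromy matrix acting on `V_b ⊗ H`, identity on `V_a`. -/
def TbEmb [Field F] (n N : ℕ)
    (M : Matrix (Fin n × (Fin N → Fin n)) (Fin n × (Fin N → Fin n)) F) :
    Matrix (Fin n × Fin n × (Fin N → Fin n)) (Fin n × Fin n × (Fin N → Fin n)) F :=
  Matrix.of fun p q => M (p.2.1, p.2.2) (q.2.1, q.2.2) * (if p.1 = q.1 then 1 else 0)

/-- `R^{(n)}_{ab}` acting on `V_a ⊗ V_b`, identity on `H`. -/
def RabEmb [Field F] (n N : ℕ) (M : Matrix (Fin n × Fin n) (Fin n × Fin n) F) :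
    Matrix (Fin n × Fin n × (Fin N → Fin n)) (Fin n × Fin n × (Fin N → Fin n)) F :=
  Matrix.of fun p q => M (p.1, p.2.1) (q.1, q.2.1) * (if p.2.2 = q.2.2 then 1 else 0)

/-!
Write `R(u) = (1 + u E) P` with `P` the flip of `V ⊗ V` and `E` a matrix independent of the spectral
parameter. The matrix `E` satisfies the 0-Hecke relations `E² = β E` and
`E₁₂ E₂₃ E₁₂ = E₂₃ E₁₂ E₂₃`, so expanding products shows that `1 + u E` satisfies the
parameter-dependent braid relation as soon as the middle parameter is `u + w + β u w`
(Fomin–Kirillov), which is the composition law of `⊖`: `x ⊖ z = u + w + β u w` for `u = x ⊖ y`,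
`w = y ⊖ z`. Conjugating by flips turns the braid relation into the Yang–Baxter equation
for `R` on `V_a ⊗ V_b ⊗ V_i`. Finally `R_{ab}` is moved through the monodromy matrices one site at
a time, operators at different sites and on different auxiliary spaces commuting.
-/

open Matrix

section Ampliation

variable {K α γ μ : Type*} [CommRing K] [Fintype α] [DecidableEq α] [Fintype γ] [DecidableEq γ]
  [Fintype μ] [DecidableEq μ]

/-- Ampliation `M ↦ M ⊗ 1` of an operator on one tensor factor, where the factorization of the
index set `μ` of the ambient space is given by `e : μ ≃ α × γ`. -/
def ampliate (e : μ ≃ α × γ) : Matrix α α K →ₐ[K] Matrix μ μ K :=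
  (reindexAlgEquiv K K e.symm).toAlgHom.comp
    ((kroneckerAlgEquiv α γ K).toAlgHom.comp Algebra.TensorProduct.includeLeft)

lemma ampliate_apply (e : μ ≃ α × γ) (M : Matrix α α K) (p q : μ) :
    ampliate e M p q = M (e p).1 (e q).1 * if (e p).2 = (e q).2 then 1 else 0 := by
  simp [ampliate, one_apply]

lemma ampliate_mulVec (e : μ ≃ α × γ) (M : Matrix α α K) (g : μ → K) (p : μ) :
    (ampliate e M *ᵥ g) p = (M *ᵥ fun a => g (e.symm (a, (e p).2))) (e p).1 := by
  simp only [mulVec, dotProduct, ampliate_apply]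
  rw [← e.symm.sum_comp]
  simp [Fintype.sum_prod_type]

end Ampliation

section Legs

variable {K α₁ α₂ α₃ : Type*} [CommRing K] [Fintype α₁] [DecidableEq α₁] [Fintype α₂]
  [DecidableEq α₂] [Fintype α₃] [DecidableEq α₃]

/-- The operator on a threefold tensor product acting by `M` on the first two factors. -/
def onLegs₁₂ : Matrix (α₁ × α₂) (α₁ × α₂) K →ₐ[K] Matrix (α₁ × α₂ × α₃) (α₁ × α₂ × α₃) K :=
  ampliate (Equiv.prodAssoc α₁ α₂ α₃).symm

/-- The operator on a threefold tensor product acting by `M` on the outer two factors. -/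
def onLegs₁₃ : Matrix (α₁ × α₃) (α₁ × α₃) K →ₐ[K] Matrix (α₁ × α₂ × α₃) (α₁ × α₂ × α₃) K :=
  ampliate
    { toFun := fun p => ((p.1, p.2.2), p.2.1)
      invFun := fun q => (q.1.1, q.2, q.1.2) }

/-- The operator on a threefold tensor product acting by `M` on the last two factors. -/
def onLegs₂₃ : Matrix (α₂ × α₃) (α₂ × α₃) K →ₐ[K] Matrix (α₁ × α₂ × α₃) (α₁ × α₂ × α₃) K :=
  ampliate (Equiv.prodComm α₁ (α₂ × α₃))

lemma onLegs₁₂_mulVec (M : Matrix (α₁ × α₂) (α₁ × α₂) K) (g : α₁ × α₂ × α₃ → K)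
    (a : α₁) (b : α₂) (c : α₃) :
    (onLegs₁₂ M *ᵥ g) (a, b, c) = (M *ᵥ fun q => g (q.1, q.2, c)) (a, b) :=
  ampliate_mulVec _ M g (a, b, c)

lemma onLegs₁₃_mulVec (M : Matrix (α₁ × α₃) (α₁ × α₃) K) (g : α₁ × α₂ × α₃ → K)
    (a : α₁) (b : α₂) (c : α₃) :
    (onLegs₁₃ M *ᵥ g) (a, b, c) = (M *ᵥ fun q => g (q.1, b, q.2)) (a, c) :=
  ampliate_mulVec _ M g (a, b, c)

lemma onLegs₂₃_mulVec (M : Matrix (α₂ × α₃) (α₂ × α₃) K) (g : α₁ × α₂ × α₃ → K)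
    (a : α₁) (b : α₂) (c : α₃) :
    (onLegs₂₃ M *ᵥ g) (a, b, c) = (M *ᵥ fun q => g (a, q.1, q.2)) (b, c) :=
  ampliate_mulVec _ M g (a, b, c)

/-- The Yang–Baxter equation `R₁₂ S₁₃ T₂₃ = T₂₃ S₁₃ R₁₂`; the three tensor factors may differ. -/
def IsYangBaxter (R : Matrix (α₁ × α₂) (α₁ × α₂) K) (S : Matrix (α₁ × α₃) (α₁ × α₃) K)
    (T : Matrix (α₂ × α₃) (α₂ × α₃) K) : Prop :=
  onLegs₁₂ R * onLegs₁₃ S * onLegs₂₃ T = onLegs₂₃ T * onLegs₁₃ S * onLegs₁₂ R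

end Legs

section Braid

variable {K ι : Type*} [CommRing K] [Fintype ι] [DecidableEq ι]

variable (K ι) in
/-- The flip `P` of `V ⊗ V`. -/
def flipMatrix : Matrix (ι × ι) (ι × ι) K := Equiv.Perm.permMatrix K (Equiv.prodComm ι ι)

lemma flipMatrix_mulVec (h : ι × ι → K) (p : ι × ι) : (flipMatrix K ι *ᵥ h) p = h p.swap :=
  congrFun (permMatrix_mulVec (Equiv.prodComm ι ι)) p

lemma mul_flipMatrix_apply (M : Matrix (ι × ι) (ι × ι) K) (p q : ι × ι) :
    (M * flipMatrix K ι) p q = M p q.swap :=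
  congrFun₂ (PEquiv.mul_toMatrix_toPEquiv M (Equiv.prodComm ι ι)) p q

local notation "P₁₂" => onLegs₁₂ (flipMatrix _ _)
local notation "P₁₃" => onLegs₁₃ (flipMatrix _ _)
local notation "P₂₃" => onLegs₂₃ (flipMatrix _ _)

lemma flip₁₂_mul_onLegs₁₃ (M : Matrix (ι × ι) (ι × ι) K) :
    P₁₂ * onLegs₁₃ M = onLegs₂₃ M * P₁₂ := by
  apply mulVec_injective
  ext g ⟨a, b, c⟩
  simp only [← mulVec_mulVec, onLegs₁₂_mulVec, onLegs₁₃_mulVec, onLegs₂₃_mulVec,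
    flipMatrix_mulVec, Prod.swap]

lemma flip₂₃_mul_onLegs₁₃ (M : Matrix (ι × ι) (ι × ι) K) :
    P₂₃ * onLegs₁₃ M = onLegs₁₂ M * P₂₃ := by
  apply mulVec_injective
  ext g ⟨a, b, c⟩
  simp only [← mulVec_mulVec, onLegs₁₂_mulVec, onLegs₁₃_mulVec, onLegs₂₃_mulVec,
    flipMatrix_mulVec, Prod.swap]

lemma flip₂₃_mul_flip₁₂_mul_onLegs₂₃ (M : Matrix (ι × ι) (ι × ι) K) :
    P₂₃ * (P₁₂ * onLegs₂₃ M) = onLegs₁₂ M * (P₂₃ * P₁₂) := by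
  apply mulVec_injective
  ext g ⟨a, b, c⟩
  simp only [← mulVec_mulVec, onLegs₁₂_mulVec, onLegs₂₃_mulVec, flipMatrix_mulVec, Prod.swap]

lemma flip₁₂_mul_flip₂₃_mul_onLegs₁₂ (M : Matrix (ι × ι) (ι × ι) K) :
    P₁₂ * (P₂₃ * onLegs₁₂ M) = onLegs₂₃ M * (P₁₂ * P₂₃) := by
  apply mulVec_injective
  ext g ⟨a, b, c⟩
  simp only [← mulVec_mulVec, onLegs₁₂_mulVec, onLegs₂₃_mulVec, flipMatrix_mulVec, Prod.swap]

theorem isYangBaxter_of_braid {A B C : Matrix (ι × ι) (ι × ι) K}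
    (braid : onLegs₁₂ A * onLegs₂₃ B * onLegs₁₂ C =
      (onLegs₂₃ C * onLegs₁₂ B * onLegs₂₃ A : Matrix (ι × ι × ι) (ι × ι × ι) K)) :
    IsYangBaxter (A * flipMatrix K ι) (B * flipMatrix K ι) (C * flipMatrix K ι) := by
  unfold IsYangBaxter
  simp only [map_mul]
  calc onLegs₁₂ A * P₁₂ * (onLegs₁₃ B * P₁₃) * (onLegs₂₃ C * P₂₃)
      = onLegs₁₂ A * (P₁₂ * onLegs₁₃ B) * P₁₃ * onLegs₂₃ C * P₂₃ := by simp only [mul_assoc]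
    _ = onLegs₁₂ A * onLegs₂₃ B * (P₁₂ * P₁₃) * onLegs₂₃ C * P₂₃ := by
        rw [flip₁₂_mul_onLegs₁₃]; simp only [mul_assoc]
    _ = onLegs₁₂ A * onLegs₂₃ B * (P₂₃ * (P₁₂ * onLegs₂₃ C)) * P₂₃ := by
        rw [flip₁₂_mul_onLegs₁₃]; simp only [mul_assoc]
    _ = onLegs₁₂ A * onLegs₂₃ B * onLegs₁₂ C * (P₂₃ * (P₁₂ * P₂₃)) := by
        rw [flip₂₃_mul_flip₁₂_mul_onLegs₂₃]; simp only [mul_assoc]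
    _ = onLegs₂₃ C * onLegs₁₂ B * onLegs₂₃ A * (P₁₂ * (P₂₃ * P₁₂)) := by
        rw [braid, flip₂₃_mul_flip₁₂_mul_onLegs₂₃]
    _ = onLegs₂₃ C * onLegs₁₂ B * (P₁₂ * (P₂₃ * onLegs₁₂ A)) * P₁₂ := by
        rw [flip₁₂_mul_flip₂₃_mul_onLegs₁₂ A]; simp only [mul_assoc]
    _ = onLegs₂₃ C * onLegs₁₂ B * (P₂₃ * P₁₃) * onLegs₁₂ A * P₁₂ := by
        rw [flip₂₃_mul_onLegs₁₃]; simp only [mul_assoc]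
    _ = onLegs₂₃ C * (P₂₃ * onLegs₁₃ B) * P₁₃ * onLegs₁₂ A * P₁₂ := by
        rw [flip₂₃_mul_onLegs₁₃ B]; simp only [mul_assoc]
    _ = onLegs₂₃ C * P₂₃ * (onLegs₁₃ B * P₁₃) * (onLegs₁₂ A * P₁₂) := by simp only [mul_assoc]

end Braid

theorem braid_of_hecke {K A : Type*} [CommRing K] [Ring A] [Algebra K A] {β : K} {e f : A}
    (he : e * e = β • e) (hf : f * f = β • f) (hef : e * f * e = f * e * f) (u w : K) :
    (1 + u • e) * (1 + (u + w + β * u * w) • f) * (1 + w • e) =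
      (1 + w • f) * (1 + (u + w + β * u * w) • e) * (1 + u • f) := by
  have expand_of_mul_self (p v q : K) {a b : A} (ha : a * a = β • a) :
      (1 + p • a) * (1 + v • b) * (1 + q • a) =
        1 + (p + q + β * p * q) • a + v • b + (p * v) • (a * b) + (v * q) • (b * a) +
          (p * v * q) • (a * b * a) := by
    simp only [mul_add, add_mul, mul_one, one_mul, smul_mul_assoc, mul_smul_comm, ha]
    module
  rw [expand_of_mul_self _ _ _ he, expand_of_mul_self _ _ _ hf, hef]
  module

section RMatrix

variable {K ι : Type*} [CommRing K] [Fintype ι] [LinearOrder ι]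

variable (ι) in
/-- The 0-Hecke generator `E` on `V ⊗ V`: its rows `(a, b)` with `b < a` are those of `β + P`, and
its other rows vanish. -/
def heckeMatrix (β : K) : Matrix (ι × ι) (ι × ι) K := of fun p q =>
  if p.2 < p.1 then (if q = p then β else 0) + (if q = p.swap then 1 else 0) else 0

lemma heckeMatrix_mulVec (β : K) (h : ι × ι → K) (a b : ι) :
    (heckeMatrix ι β *ᵥ h) (a, b) = if b < a then β * h (a, b) + h (b, a) else 0 := by
  by_cases hba : b < a <;>
    simp [heckeMatrix, mulVec, dotProduct, hba, add_mul, Finset.sum_add_distrib]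

lemma heckeMatrix_mul_self (β : K) :
    heckeMatrix ι β * heckeMatrix ι β = β • heckeMatrix ι β := by
  apply mulVec_injective
  ext h ⟨a, b⟩
  simp only [← mulVec_mulVec, smul_mulVec, Pi.smul_apply, smul_eq_mul, heckeMatrix_mulVec]
  grind

lemma heckeMatrix_braid (β : K) :
    onLegs₁₂ (heckeMatrix ι β) * onLegs₂₃ (heckeMatrix ι β) * onLegs₁₂ (heckeMatrix ι β) =
      (onLegs₂₃ (heckeMatrix ι β) * onLegs₁₂ (heckeMatrix ι β) * onLegs₂₃ (heckeMatrix ι β) :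
        Matrix (ι × ι × ι) (ι × ι × ι) K) := by
  apply mulVec_injective
  ext g ⟨a, b, c⟩
  simp only [← mulVec_mulVec, onLegs₁₂_mulVec, onLegs₂₃_mulVec, heckeMatrix_mulVec]
  -- Both sides vanish at `(a, b, c)` unless `c < b < a`.
  grind

variable (ι) in
/-- The R-matrix `(1 + u E) P` obtained by Baxterization of the 0-Hecke generator `E`. -/
def heckeRMatrix (β u : K) : Matrix (ι × ι) (ι × ι) K :=
  (1 + u • heckeMatrix ι β) * flipMatrix K ι

theorem isYangBaxter_heckeRMatrix (β u w : K) :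
    IsYangBaxter (heckeRMatrix ι β u) (heckeRMatrix ι β (u + w + β * u * w))
      (heckeRMatrix ι β w) := by
  apply isYangBaxter_of_braid
  simp only [map_add, map_one, map_smul]
  apply braid_of_hecke
  · rw [← map_mul, heckeMatrix_mul_self, map_smul]
  · rw [← map_mul, heckeMatrix_mul_self, map_smul]
  · exact heckeMatrix_braid β

end RMatrix

section Rmat

variable [Field F] (n : ℕ)

lemma Rmat_eq_heckeRMatrix (β x y : F) :
    Rmat n β x y = heckeRMatrix (Fin n) β (om β x y) := by
  ext ⟨a, b⟩ ⟨c, d⟩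
  simp only [heckeRMatrix, mul_flipMatrix_apply, Rmat, heckeMatrix, of_apply, Matrix.add_apply,
    Matrix.smul_apply, Matrix.one_apply, smul_eq_mul, Prod.swap_prod_mk, Prod.mk.injEq]
  grind

lemma om_eq_add_add_mul {β y z : F} (x : F) (hy : 1 + β * y ≠ 0) (hz : 1 + β * z ≠ 0) :
    om β x z = om β x y + om β y z + β * om β x y * om β y z := by
  have om_mul_cancel (a : F) {b : F} (hb : 1 + β * b ≠ 0) : om β a b * (1 + β * b) = a - b :=
    div_mul_cancel₀ _ hb
  apply mul_right_cancel₀ hz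
  linear_combination om_mul_cancel x hz - om_mul_cancel x hy -
    (1 + β * om β x y) * om_mul_cancel y hz

theorem isYangBaxter_Rmat {β y z : F} (x : F) (hy : 1 + β * y ≠ 0) (hz : 1 + β * z ≠ 0) :
    IsYangBaxter (Rmat n β x y) (Rmat n β x z) (Rmat n β y z) := by
  simp only [Rmat_eq_heckeRMatrix, om_eq_add_add_mul x hy hz]
  exact isYangBaxter_heckeRMatrix β _ _

end Rmat

section Sites

variable {K α₁ α₂ ι σ : Type*} [DecidableEq σ]

/-- The restriction of a vector of `V_a ⊗ V_b ⊗ H` to the configurations that agree with `s` away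
from site `i`, as a vector of `V_a ⊗ V_b ⊗ V_i`. -/
def siteSlice (i : σ) (s : σ → ι) (g : α₁ × α₂ × (σ → ι) → K) : α₁ × α₂ × ι → K :=
  fun p => g (p.1, p.2.1, Function.update s i p.2.2)

lemma eq_of_siteSlice_eq (i : σ) {g h : α₁ × α₂ × (σ → ι) → K}
    (hgh : ∀ s, siteSlice i s g = siteSlice i s h) : g = h := by
  ext ⟨a, b, s⟩
  simpa only [siteSlice, Function.update_eq_self] using congrFun (hgh s) (a, b, s i)

variable [CommRing K] [Fintype α₁] [DecidableEq α₁] [Fintype α₂] [DecidableEq α₂] [Fintype ι]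
  [DecidableEq ι] [Fintype σ]

/-- The operator on `V_a ⊗ ⨂_σ V` acting by `M` on `V_a` and on the factor at site `i`. -/
def onSite (i : σ) : Matrix (α₁ × ι) (α₁ × ι) K →ₐ[K] Matrix (α₁ × (σ → ι)) (α₁ × (σ → ι)) K :=
  ampliate (((Equiv.refl α₁).prodCongr (Equiv.funSplitAt i ι)).trans (Equiv.prodAssoc _ _ _).symm)

lemma onSite_mulVec (i : σ) (M : Matrix (α₁ × ι) (α₁ × ι) K) (g : α₁ × (σ → ι) → K)
    (a : α₁) (s : σ → ι) :
    (onSite i M *ᵥ g) (a, s) = (M *ᵥ fun q => g (q.1, Function.update s i q.2)) (a, s i) := by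
  refine (ampliate_mulVec _ M g (a, s)).trans ?_
  have splitAt_symm (c : ι) :
      (Equiv.funSplitAt i ι).symm (c, fun j => s j) = Function.update s i c := by
    ext j
    by_cases hj : j = i <;> simp [hj]
  simp [splitAt_symm]

lemma commute_onSite_of_ne {i j : σ} (hij : i ≠ j) (A : Matrix (α₁ × ι) (α₁ × ι) K)
    (B : Matrix (α₂ × ι) (α₂ × ι) K) :
    Commute (onLegs₁₃ (onSite i A) : Matrix (α₁ × α₂ × (σ → ι)) (α₁ × α₂ × (σ → ι)) K)
      (onLegs₂₃ (onSite j B)) := by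
  apply mulVec_injective
  ext g ⟨a, b, s⟩
  simp only [← mulVec_mulVec, onLegs₁₃_mulVec, onLegs₂₃_mulVec, onSite_mulVec,
    Function.update_of_ne hij, Function.update_of_ne hij.symm, Function.update_comm hij]
  simp only [mulVec, dotProduct, Finset.mul_sum]
  rw [Finset.sum_comm]
  simp only [mul_left_comm]

lemma siteSlice_onLegs₁₂_mulVec (i : σ) (s : σ → ι) (M : Matrix (α₁ × α₂) (α₁ × α₂) K)
    (g : α₁ × α₂ × (σ → ι) → K) :
    siteSlice i s (onLegs₁₂ M *ᵥ g) = onLegs₁₂ M *ᵥ siteSlice i s g := by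
  ext ⟨a, b, c⟩
  simp only [siteSlice, onLegs₁₂_mulVec]

lemma siteSlice_onLegs₁₃_mulVec (i : σ) (s : σ → ι) (M : Matrix (α₁ × ι) (α₁ × ι) K)
    (g : α₁ × α₂ × (σ → ι) → K) :
    siteSlice i s (onLegs₁₃ (onSite i M) *ᵥ g) = onLegs₁₃ M *ᵥ siteSlice i s g := by
  ext ⟨a, b, c⟩
  simp only [siteSlice, onLegs₁₃_mulVec, onSite_mulVec, Function.update_self,
    Function.update_idem]

lemma siteSlice_onLegs₂₃_mulVec (i : σ) (s : σ → ι) (M : Matrix (α₂ × ι) (α₂ × ι) K)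
    (g : α₁ × α₂ × (σ → ι) → K) :
    siteSlice i s (onLegs₂₃ (onSite i M) *ᵥ g) = onLegs₂₃ M *ᵥ siteSlice i s g := by
  ext ⟨a, b, c⟩
  simp only [siteSlice, onLegs₂₃_mulVec, onSite_mulVec, Function.update_self,
    Function.update_idem]

theorem IsYangBaxter.onSite {R : Matrix (α₁ × α₂) (α₁ × α₂) K} {S : Matrix (α₁ × ι) (α₁ × ι) K}
    {T : Matrix (α₂ × ι) (α₂ × ι) K} (h : IsYangBaxter R S T) (i : σ) :
    IsYangBaxter R (onSite i S) (onSite i T) := by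
  apply mulVec_injective
  funext g
  refine eq_of_siteSlice_eq i fun s => ?_
  simpa only [← mulVec_mulVec, siteSlice_onLegs₁₂_mulVec, siteSlice_onLegs₁₃_mulVec,
    siteSlice_onLegs₂₃_mulVec] using congrArg (· *ᵥ siteSlice i s g) h

end Sites

theorem intertwine_list_prod {M σ : Type*} [Monoid M] {R : M} {A B : σ → M}
    (hR : ∀ i, R * A i * B i = B i * A i * R) (hAB : ∀ i j, i ≠ j → Commute (A i) (B j))
    {l : List σ} (hl : l.Nodup) :
    R * (l.map A).prod * (l.map B).prod = (l.map B).prod * (l.map A).prod * R := by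
  induction l with
  | nil => simp
  | cons i l ih =>
    obtain ⟨hil, hl⟩ := List.nodup_cons.1 hl
    have comm_left : Commute (l.map A).prod (B i) :=
      Commute.list_prod_left _ _ (List.forall_mem_map.2 fun j hj =>
        hAB j i (ne_of_mem_of_not_mem hj hil))
    have comm_right : Commute (A i) (l.map B).prod :=
      Commute.list_prod_right _ _ (List.forall_mem_map.2 fun j hj =>
        hAB i j (ne_of_mem_of_not_mem hj hil).symm)
    simp only [List.map_cons, List.prod_cons]
    calc R * (A i * (l.map A).prod) * (B i * (l.map B).prod)
        = R * A i * ((l.map A).prod * B i) * (l.map B).prod := by simp only [mul_assoc]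
      _ = (R * A i * B i) * (l.map A).prod * (l.map B).prod := by
          rw [comm_left.eq]; simp only [mul_assoc]
      _ = B i * A i * (R * (l.map A).prod * (l.map B).prod) := by
          rw [hR]; simp only [mul_assoc]
      _ = B i * (A i * (l.map B).prod) * (l.map A).prod * R := by
          rw [ih hl]; simp only [mul_assoc]
      _ = B i * (l.map B).prod * (A i * (l.map A).prod) * R := by
          rw [comm_right.eq]; simp only [mul_assoc]

section Monodromy

variable [Field F] (n N : ℕ)

lemma RabEmb_eq_onLegs₁₂ (M : Matrix (Fin n × Fin n) (Fin n × Fin n) F) :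
    RabEmb n N M = onLegs₁₂ M := by
  ext p q
  symm
  apply ampliate_apply

lemma TaEmb_eq_onLegs₁₃ (M : Matrix (Fin n × (Fin N → Fin n)) (Fin n × (Fin N → Fin n)) F) :
    TaEmb n N M = onLegs₁₃ M := by
  ext p q
  symm
  apply ampliate_apply

lemma TbEmb_eq_onLegs₂₃ (M : Matrix (Fin n × (Fin N → Fin n)) (Fin n × (Fin N → Fin n)) F) :
    TbEmb n N M = onLegs₂₃ M := by
  ext p q
  symm
  apply ampliate_apply

lemma Rsite_eq_onSite (β u τ : F) (i : Fin N) :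
    Rsite n N β u τ i = onSite i (Rmat n β u τ) := by
  ext p q
  simp [Rsite, onSite, ampliate_apply, funext_iff]

lemma Tmono_eq_prod_onSite (β u : F) (t : Fin N → F) :
    Tmono n N β u t =
      ((List.finRange N).reverse.map fun i => onSite i (Rmat n β u (t i))).prod := by
  simp only [Tmono, Rsite_eq_onSite, List.ofFn_eq_map, List.map_reverse]

end Monodromy

lemma one_add_mul_ne_zero_of_algebraicIndependent {R A ι : Type*} [CommRing R] [Nontrivial R]
    [CommRing A] [Algebra R A] {v : ι → A} (hv : AlgebraicIndependent R v) (i j : ι) :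
    1 + v i * v j ≠ 0 := by
  intro h
  have hpoly : (1 + MvPolynomial.X i * MvPolynomial.X j : MvPolynomial ι R) = 0 :=
    hv.eq_zero_of_aeval_eq_zero _ (by simpa using h)
  simpa using congrArg MvPolynomial.constantCoeff hpoly

theorem RTT_relation_general [Field F] (n N : ℕ) {β y : F} (x : F) {t : Fin N → F}
    (hy : 1 + β * y ≠ 0) (ht : ∀ i, 1 + β * t i ≠ 0) :
    RabEmb n N (Rmat n β x y) * TaEmb n N (Tmono n N β x t) * TbEmb n N (Tmono n N β y t) =
      TbEmb n N (Tmono n N β y t) * TaEmb n N (Tmono n N β x t) *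
        RabEmb n N (Rmat n β x y) := by
  simp only [RabEmb_eq_onLegs₁₂, TaEmb_eq_onLegs₁₃, TbEmb_eq_onLegs₂₃, Tmono_eq_prod_onSite,
    map_list_prod, List.map_map, Function.comp_def]
  exact intertwine_list_prod
    (fun i => (isYangBaxter_Rmat n x hy (ht i)).onSite i)
    (fun i j hij => commute_onSite_of_ne hij _ _)
    (List.nodup_reverse.2 (List.nodup_finRange N))

/-- **RTT relation**:
`R^{(n)}_{ab}(x,y) T_a(x) T_b(y) = T_b(y) T_a(x) R^{(n)}_{ab}(x,y)`
as endomorphisms of `V_a ⊗ V_b ⊗ H`. -/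
theorem RTT_relation [Field F] [CharZero F] (n N : ℕ) (hn : 2 ≤ n) (β x y : F)
    (t : Fin N → F)
    (hind : AlgebraicIndependent ℚ (Sum.elim ![β, x, y] t)) :
    RabEmb n N (Rmat n β x y) * TaEmb n N (Tmono n N β x t) * TbEmb n N (Tmono n N β y t) =
      TbEmb n N (Tmono n N β y t) * TaEmb n N (Tmono n N β x t) *
        RabEmb n N (Rmat n β x y) := by
  exact RTT_relation_general n N x
    (one_add_mul_ne_zero_of_algebraicIndependent hind (.inl 0) (.inl 2))
    fun i => one_add_mul_ne_zero_of_algebraicIndependent hind (.inl 0) (.inr i)
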